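/- arXiv:2006.15076 — 11 statements merged into one kernel-verified Lean document; each statement's English description precedes it below -/
import Mathlib

section
/- Let X be a nonempty set and G : X × X × X → ℝ a G-metric on X. Then the function d_G defined by d_G(x,y) = G(x,y,y) + G(y,x,x) is a metric on X (it is nonnegative, vanishes exactly on the diagonal, is symmetric, and satisfies the triangle inequality). -/
open Filter Set

/-- A G-metric on a set `X`. -/
structure IsGMetric {X : Type*} (G : X → X → X → ℝ) : Prop where
  eq_iff : ∀ x y z, G x y z = 0 ↔ x = y ∧ y = z
  pos : ∀ x y, x ≠ y → 0 < G x x y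
  mono : ∀ x y z, z ≠ y → G x x y ≤ G x y z
  symm_swap : ∀ x y z, G x y z = G x z y
  symm_cycle : ∀ x y z, G x y z = G y z x
  rect : ∀ x y z a, G x y z ≤ G x a a + G a y z

/-- `D(x,y) = G(x,y,y) + G(y,x,x)`. -/
def gD {X : Type*} (G : X → X → X → ℝ) (x y : X) : ℝ :=
  G x y y + G y x x

/-- `T` is a cyclical operator with respect to the family of sets `A`. -/
def IsCyclical {X : Type*} {m : ℕ} [NeZero m] (A : Fin m → Set X) (T : X → X) : Prop :=
  ∀ i : Fin m, Set.MapsTo T (A i) (A (i + 1))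

/-- The function `d_G(x,y) = G(x,y,y) + G(y,x,x)` associated to a G-metric is a metric:
it is nonnegative, vanishes exactly on the diagonal, is symmetric, and satisfies
the triangle inequality. -/
theorem stmt_0 {X : Type*} [Nonempty X] (G : X → X → X → ℝ) (hG : IsGMetric G) :
    (∀ x y : X, 0 ≤ gD G x y) ∧
    (∀ x y : X, gD G x y = 0 ↔ x = y) ∧
    (∀ x y : X, gD G x y = gD G y x) ∧
    (∀ x y z : X, gD G x z ≤ gD G x y + gD G y z) := by
  have h0 : ∀ x y : X, x ≠ y → 0 < gD G x y := by
    intro x y h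
    have h1 := hG.pos x y h
    have h2 := hG.pos y x h.symm
    have h3 := hG.symm_cycle x y y
    have h4 := hG.symm_cycle y x x
    unfold gD
    linarith
  have h1 : ∀ x : X, gD G x x = 0 := by
    intro x
    have := (hG.eq_iff x x x).2 ⟨rfl, rfl⟩
    unfold gD
    linarith
  refine ⟨?_, ?_, ?_, ?_⟩
  · intro x y
    by_cases h : x = y
    · subst h
      exact (h1 x).ge
    · exact (h0 x y h).le
  · intro x y
    constructor
    · intro h
      by_contra hne
      exact (h0 x y hne).ne' h
    · intro h
      subst h
      exact h1 x
  · intro x y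
    exact add_comm _ _
  · intro x y z
    have h2 := hG.rect x z z y
    have h3 := hG.rect z x x y
    unfold gD
    linarith
end

section
/- Let G be a G-metric on a nonempty set X, let X_1,…,X_m be nonempty subsets of X, let T : ∪_{i=1}^m X_i → ∪_{i=1}^m X_i be a cyclical operator, and let ε > 0. Write D(x,y) = G(x,y,y) + G(y,x,x). Assume: (a) F_ε^G(T) ≠ ∅; (b) there is a function ψ : (0,∞) → (0,∞) such that for every ξ > 0 and all x, y ∈ F_ε^G(T), D(x,y) − D(Tx,Ty) < ξ implies D(x,y) ≤ ψ(ξ). Then D(x,y) ≤ ψ(2ε) for all x, y ∈ F_ε^G(T). -/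
open Filter Set

/-- Quantitative lemma: if the set of `ε`-fixed points of a cyclical operator `T` is
nonempty and satisfies the `ψ`-condition, then `D(x,y) ≤ ψ(2ε)` for all `ε`-fixed
points `x, y`. -/
theorem stmt_3 {X : Type*} [Nonempty X] {m : ℕ} [NeZero m]
    (G : X → X → X → ℝ) (hG : IsGMetric G)
    (A : Fin m → Set X) (hA : ∀ i, (A i).Nonempty)
    (T : X → X) (hT : IsCyclical A T)
    (ε : ℝ) (hε : 0 < ε)
    (hne : {x ∈ ⋃ i, A i | gD G x (T x) < ε}.Nonempty)
    (ψ : ℝ → ℝ) (hψpos : ∀ ξ > 0, 0 < ψ ξ)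
    (hψ : ∀ ξ > 0, ∀ x ∈ {x ∈ ⋃ i, A i | gD G x (T x) < ε},
      ∀ y ∈ {x ∈ ⋃ i, A i | gD G x (T x) < ε},
      gD G x y - gD G (T x) (T y) < ξ → gD G x y ≤ ψ ξ) :
    ∀ x ∈ {x ∈ ⋃ i, A i | gD G x (T x) < ε},
      ∀ y ∈ {x ∈ ⋃ i, A i | gD G x (T x) < ε},
      gD G x y ≤ ψ (2 * ε) := by
  intro x hx y hy
  refine hψ (2 * ε) (by linarith) x hx y hy ?_
  have h1 := hx.2
  have h2 := hy.2
  have a1 := hG.rect x y y (T x)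
  have a2 := hG.rect (T x) y y (T y)
  have a3 := hG.rect y x x (T y)
  have a4 := hG.rect (T y) x x (T x)
  simp only [gD] at h1 h2 ⊢
  linarith
end

section
/- Let G be a G-metric on a nonempty set X, let X_1,…,X_m be nonempty subsets of X, and let T : ∪_{i=1}^m X_i → ∪_{i=1}^m X_i be a cyclical operator. Write D(x,y) = G(x,y,y) + G(y,x,x). Suppose there exists α ∈ (0,1) such that D(Tx,Ty) ≤ α·D(x,y) for all x ∈ X_i and y ∈ X_{i+1} (indices mod m), i.e. T is a G-α-cyclical contraction. Then for every ε > 0 the set F_ε^G(T) of ε-fixed points of T is nonempty. -/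
open Filter Set

/-- A G-α-cyclical contraction has, for every `ε > 0`, a nonempty set of
`ε`-fixed points. -/
theorem stmt_4 {X : Type*} [Nonempty X] {m : ℕ} [NeZero m]
    (G : X → X → X → ℝ) (hG : IsGMetric G)
    (A : Fin m → Set X) (hA : ∀ i, (A i).Nonempty)
    (T : X → X) (hT : IsCyclical A T)
    (α : ℝ) (hα : α ∈ Set.Ioo (0 : ℝ) 1)
    (hcontr : ∀ i : Fin m, ∀ x ∈ A i, ∀ y ∈ A (i + 1),
      gD G (T x) (T y) ≤ α * gD G x y) :
    ∀ ε > 0, {x ∈ ⋃ i, A i | gD G x (T x) < ε}.Nonempty := by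
  intro ε hε
  obtain ⟨x, hx⟩ := hA 0
  have key : ∀ n : ℕ, (∃ i, T^[n] x ∈ A i) ∧
      gD G (T^[n] x) (T (T^[n] x)) ≤ α ^ n * gD G x (T x) := by
    intro n
    induction n with
    | zero => exact ⟨⟨0, hx⟩, by simp⟩
    | succ k ih =>
      obtain ⟨⟨i, hi⟩, h⟩ := ih
      rw [Function.iterate_succ_apply']
      refine ⟨⟨i + 1, hT i hi⟩, ?_⟩
      calc _ ≤ α * gD G (T^[k] x) (T (T^[k] x)) := hcontr i _ hi _ (hT i hi)
        _ ≤ α * (α ^ k * gD G x (T x)) := mul_le_mul_of_nonneg_left h hα.1.le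
        _ = _ := by ring
  have hlim : Tendsto (fun n : ℕ => α ^ n * gD G x (T x)) atTop (nhds 0) := by
    simpa using (tendsto_pow_atTop_nhds_zero_of_lt_one hα.1.le hα.2).mul_const (gD G x (T x))
  obtain ⟨n, hn⟩ := (hlim.eventually (gt_mem_nhds hε)).exists
  exact ⟨T^[n] x, Set.mem_iUnion.2 (key n).1, (key n).2.trans_lt hn⟩
end

section
/- Let G be a G-metric on a nonempty set X, let X_1,…,X_m be nonempty subsets of X, and let T : ∪_{i=1}^m X_i → ∪_{i=1}^m X_i be a cyclical operator. Write D(x,y) = G(x,y,y) + G(y,x,x). Suppose T is a G-Chatterjea cyclical operator, i.e. there exists α ∈ (0,1/2) such that D(Tx,Ty) ≤ α·(D(x,Ty) + D(y,Tx)) for all x ∈ X_i and y ∈ X_{i+1} (indices mod m). Then for every ε > 0 the set F_ε^G(T) of ε-fixed points of T is nonempty. -/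
open Filter Set

/-- A G-Chatterjea cyclical operator has, for every `ε > 0`, a nonempty set of
`ε`-fixed points. -/
theorem stmt_5 {X : Type*} [Nonempty X] {m : ℕ} [NeZero m]
    (G : X → X → X → ℝ) (hG : IsGMetric G)
    (A : Fin m → Set X) (hA : ∀ i, (A i).Nonempty)
    (T : X → X) (hT : IsCyclical A T)
    (α : ℝ) (hα : α ∈ Set.Ioo (0 : ℝ) (1/2))
    (hcontr : ∀ i : Fin m, ∀ x ∈ A i, ∀ y ∈ A (i + 1),
      gD G (T x) (T y) ≤ α * (gD G x (T y) + gD G y (T x))) :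
    ∀ ε > 0, {x ∈ ⋃ i, A i | gD G x (T x) < ε}.Nonempty := by
  obtain ⟨h0, h1⟩ := hα
  have hself : ∀ x, gD G x x = 0 := by
    intro x
    have := (hG.eq_iff x x x).2 ⟨rfl, rfl⟩
    simp [gD, this]
  have htri : ∀ x y z, gD G x z ≤ gD G x y + gD G y z := by
    intro x y z
    have e1 := hG.rect x z z y
    have e2 := hG.rect z x x y
    unfold gD
    linarith
  set k : ℝ := α / (1 - α) with hk
  have hp : 0 < 1 - α := by linarith
  have hk0 : 0 ≤ k := by positivity
  have hk1 : k < 1 := by rw [hk, div_lt_one hp]; linarith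
  have step : ∀ i : Fin m, ∀ x ∈ A i, gD G (T x) (T (T x)) ≤ k * gD G x (T x) := by
    intro i x hx
    have c := hcontr i x hx (T x) (hT i hx)
    rw [hself, add_zero] at c
    have t := mul_le_mul_of_nonneg_left (htri x (T x) (T (T x))) h0.le
    rw [hk, div_mul_eq_mul_div, le_div_iff₀ hp]
    linarith
  intro ε hε
  obtain ⟨x, hx⟩ := hA 0
  have key : ∀ n : ℕ, ∃ i : Fin m, ∃ y ∈ A i, gD G y (T y) ≤ k ^ n * gD G x (T x) := by
    intro n
    induction n with
    | zero => exact ⟨0, x, hx, by simp⟩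
    | succ n ih =>
      obtain ⟨i, y, hy, h⟩ := ih
      refine ⟨i + 1, T y, hT i hy, (step i y hy).trans ?_⟩
      rw [pow_succ', mul_assoc]
      exact mul_le_mul_of_nonneg_left h hk0
  have lim : Tendsto (fun n : ℕ => k ^ n * gD G x (T x)) atTop (nhds 0) := by
    simpa using (tendsto_pow_atTop_nhds_zero_of_lt_one hk0 hk1).mul_const (gD G x (T x))
  obtain ⟨n, hn⟩ := (lim.eventually (gt_mem_nhds hε)).exists
  obtain ⟨i, y, hy, h⟩ := key n
  exact ⟨y, Set.mem_iUnion.2 ⟨i, hy⟩, h.trans_lt hn⟩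
end

section
/- Let G be a G-metric on a nonempty set X, let X_1,…,X_m be nonempty subsets of X, and let T : ∪_{i=1}^m X_i → ∪_{i=1}^m X_i be a cyclical operator. Write D(x,y) = G(x,y,y) + G(y,x,x). Suppose T is a G-Mohseni cyclical operator, i.e. there exists α ∈ (0,1/2) such that D(Tx,Ty) ≤ α·(D(x,y) + D(Tx,Ty)) for all x ∈ X_i and y ∈ X_{i+1} (indices mod m). Then for every ε > 0 the set F_ε^G(T) of ε-fixed points of T is nonempty. -/
open Filter Set

/-- A G-Mohseni cyclical operator has, for every `ε > 0`, a nonempty set of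
`ε`-fixed points. -/
theorem stmt_6 {X : Type*} [Nonempty X] {m : ℕ} [NeZero m]
    (G : X → X → X → ℝ) (hG : IsGMetric G)
    (A : Fin m → Set X) (hA : ∀ i, (A i).Nonempty)
    (T : X → X) (hT : IsCyclical A T)
    (α : ℝ) (hα : α ∈ Set.Ioo (0 : ℝ) (1/2))
    (hcontr : ∀ i : Fin m, ∀ x ∈ A i, ∀ y ∈ A (i + 1),
      gD G (T x) (T y) ≤ α * (gD G x y + gD G (T x) (T y))) :
    ∀ ε > 0, {x ∈ ⋃ i, A i | gD G x (T x) < ε}.Nonempty := by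
  intro ε hε
  obtain ⟨hα0, hα1⟩ := hα
  obtain ⟨x, hx⟩ := hA 0
  have hk0 : 0 ≤ α / (1 - α) := div_nonneg hα0.le (by linarith)
  have hk1 : α / (1 - α) < 1 := by
    rw [div_lt_one (by linarith)]
    linarith
  have key : ∀ n : ℕ, ∃ i : Fin m, ∃ y ∈ A i,
      gD G y (T y) ≤ (α / (1 - α)) ^ n * gD G x (T x) := by
    intro n
    induction n with
    | zero => exact ⟨0, x, hx, by simp⟩
    | succ n ih =>
      obtain ⟨i, y, hy, h⟩ := ih
      refine ⟨i + 1, T y, hT i hy, ?_⟩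
      have h1 := hcontr i y hy (T y) (hT i hy)
      have h2 : gD G (T y) (T (T y)) ≤ α / (1 - α) * gD G y (T y) := by
        rw [div_mul_eq_mul_div, le_div_iff₀ (by linarith)]
        linarith
      have h3 := mul_le_mul_of_nonneg_left h hk0
      rw [pow_succ', mul_assoc]
      exact h2.trans h3
  have hlim : Tendsto (fun n : ℕ => (α / (1 - α)) ^ n * gD G x (T x)) atTop (nhds 0) := by
    simpa using (tendsto_pow_atTop_nhds_zero_of_lt_one hk0 hk1).mul_const (gD G x (T x))
  obtain ⟨n, hn⟩ := (hlim.eventually (gt_mem_nhds hε)).exists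
  obtain ⟨i, y, hy, h⟩ := key n
  exact ⟨y, Set.mem_iUnion.2 ⟨i, hy⟩, h.trans_lt hn⟩
end

section
/- Let G be a G-metric on a nonempty set X, let X_1,…,X_m be nonempty subsets of X, and let T : ∪_{i=1}^m X_i → ∪_{i=1}^m X_i be a cyclical operator. Write D(x,y) = G(x,y,y) + G(y,x,x). Suppose T is a G-Mohsenialhosseini cyclical operator: there exist constants α, β, γ ∈ [0,1/2) such that for all x ∈ X_i and y ∈ X_{i+1} (indices mod m) at least one of the following holds: (i) D(Tx,Ty) ≤ α·(D(x,y) + D(Tx,Ty)); (ii) D(Tx,Ty) ≤ β·(D(x,Tx) + D(y,Ty)); (iii) D(Tx,Ty) ≤ γ·(D(x,Ty) + D(y,Tx)). Then for every ε > 0 the set F_ε^G(T) of ε-fixed points of T is nonempty. -/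
open Filter Set

/-- A G-Mohsenialhosseini cyclical operator has, for every `ε > 0`, a nonempty set of
`ε`-fixed points. -/
theorem stmt_7 {X : Type*} [Nonempty X] {m : ℕ} [NeZero m]
    (G : X → X → X → ℝ) (hG : IsGMetric G)
    (A : Fin m → Set X) (hA : ∀ i, (A i).Nonempty)
    (T : X → X) (hT : IsCyclical A T)
    (α β γ : ℝ)
    (hα : α ∈ Set.Ico (0 : ℝ) (1/2)) (hβ : β ∈ Set.Ico (0 : ℝ) (1/2))
    (hγ : γ ∈ Set.Ico (0 : ℝ) (1/2))
    (hcontr : ∀ i : Fin m, ∀ x ∈ A i, ∀ y ∈ A (i + 1),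
      gD G (T x) (T y) ≤ α * (gD G x y + gD G (T x) (T y)) ∨
      gD G (T x) (T y) ≤ β * (gD G x (T x) + gD G y (T y)) ∨
      gD G (T x) (T y) ≤ γ * (gD G x (T y) + gD G y (T x))) :
    ∀ ε > 0, {x ∈ ⋃ i, A i | gD G x (T x) < ε}.Nonempty := by
  have gnn : ∀ x y, 0 ≤ G x y y := by
    intro x y
    by_cases h : x = y
    · exact ((hG.eq_iff x y y).2 ⟨h, rfl⟩).ge
    · rw [hG.symm_cycle x y y]
      exact (hG.pos y x (Ne.symm h)).le
  have dnn : ∀ x y, 0 ≤ gD G x y := fun x y => add_nonneg (gnn x y) (gnn y x)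
  have dself : ∀ x, gD G x x = 0 := by
    intro x
    have := (hG.eq_iff x x x).2 ⟨rfl, rfl⟩
    simp [gD, this]
  have dtri : ∀ x y z, gD G x z ≤ gD G x y + gD G y z := by
    intro x y z
    have h1 := hG.rect x z z y
    have h2 := hG.rect z x x y
    unfold gD
    linarith
  obtain ⟨M, hM0, hM, h1, h2, h3⟩ : ∃ M : ℝ, 0 ≤ M ∧ M < 1/2 ∧ α ≤ M ∧ β ≤ M ∧ γ ≤ M :=
    ⟨max α (max β γ), le_max_of_le_left hα.1, max_lt hα.2 (max_lt hβ.2 hγ.2), le_max_left _ _,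
      (le_max_left _ _).trans (le_max_right _ _), (le_max_right _ _).trans (le_max_right _ _)⟩
  have step : ∀ i, ∀ x ∈ A i, gD G (T x) (T (T x)) ≤ M / (1 - M) * gD G x (T x) := by
    intro i x hx
    have key : gD G (T x) (T (T x)) ≤ M * (gD G x (T x) + gD G (T x) (T (T x))) := by
      have hs := add_nonneg (dnn x (T x)) (dnn (T x) (T (T x)))
      rcases hcontr i x hx (T x) (hT i hx) with h | h | h
      · exact h.trans (mul_le_mul_of_nonneg_right h1 hs)
      · exact h.trans (mul_le_mul_of_nonneg_right h2 hs)
      · rw [dself, add_zero] at h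
        exact h.trans ((mul_le_mul_of_nonneg_left (dtri _ _ _) hγ.1).trans
          (mul_le_mul_of_nonneg_right h3 hs))
    rw [div_mul_eq_mul_div, le_div_iff₀ (by linarith)]
    linarith
  have hk0 : 0 ≤ M / (1 - M) := div_nonneg hM0 (by linarith)
  have hk1 : M / (1 - M) < 1 := by
    rw [div_lt_one (by linarith)]
    linarith
  intro ε hε
  obtain ⟨x0, hx0⟩ := hA 0
  have iter : ∀ n : ℕ, ∃ i, ∃ x ∈ A i, gD G x (T x) ≤ (M / (1 - M)) ^ n * gD G x0 (T x0) := by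
    intro n
    induction n with
    | zero => exact ⟨0, x0, hx0, by simp⟩
    | succ n ih =>
      obtain ⟨i, x, hx, h⟩ := ih
      refine ⟨i + 1, T x, hT i hx, (step i x hx).trans ?_⟩
      rw [pow_succ', mul_assoc]
      exact mul_le_mul_of_nonneg_left h hk0
  have lim := (tendsto_pow_atTop_nhds_zero_of_lt_one hk0 hk1).mul_const (gD G x0 (T x0))
  rw [zero_mul] at lim
  obtain ⟨n, hn⟩ := (lim.eventually (gt_mem_nhds hε)).exists
  obtain ⟨i, x, hx, h⟩ := iter n
  exact ⟨x, Set.mem_iUnion.2 ⟨i, hx⟩, h.trans_lt hn⟩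
end

section
/- Let G be a G-metric on a nonempty set X, let X_1,…,X_m be nonempty subsets of X, and let T : ∪_{i=1}^m X_i → ∪_{i=1}^m X_i be a cyclical operator. Write D(x,y) = G(x,y,y) + G(y,x,x). Suppose T is a G-Mohseni-semi cyclical operator, i.e. there exists α ∈ (0,1/2) such that D(Tx,Ty) ≤ α·(D(x,y) + D(x,Tx)) for all x ∈ X_i and y ∈ X_{i+1} (indices mod m). Then for every ε > 0 the set F_ε^G(T) of ε-fixed points of T is nonempty. -/
open Filter Set

/-- A G-Mohseni-semi cyclical operator has, for every `ε > 0`, a nonempty set of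
`ε`-fixed points. -/
theorem stmt_8 {X : Type*} [Nonempty X] {m : ℕ} [NeZero m]
    (G : X → X → X → ℝ) (hG : IsGMetric G)
    (A : Fin m → Set X) (hA : ∀ i, (A i).Nonempty)
    (T : X → X) (hT : IsCyclical A T)
    (α : ℝ) (hα : α ∈ Set.Ioo (0 : ℝ) (1/2))
    (hcontr : ∀ i : Fin m, ∀ x ∈ A i, ∀ y ∈ A (i + 1),
      gD G (T x) (T y) ≤ α * (gD G x y + gD G x (T x))) :
    ∀ ε > 0, {x ∈ ⋃ i, A i | gD G x (T x) < ε}.Nonempty := by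
  intro ε hε
  obtain ⟨h0, h1⟩ := hα
  obtain ⟨x, hx⟩ := hA 0
  have key : ∀ n : ℕ, ∃ i : Fin m, ∃ z ∈ A i,
      gD G z (T z) ≤ (2 * α) ^ n * gD G x (T x) := by
    intro n
    induction n with
    | zero => exact ⟨0, x, hx, by simp⟩
    | succ k ih =>
      obtain ⟨i, z, hz, h⟩ := ih
      refine ⟨i + 1, T z, hT i hz, ?_⟩
      have h2 := hcontr i z hz (T z) (hT i hz)
      have h3 := mul_le_mul_of_nonneg_left h (by linarith : (0 : ℝ) ≤ 2 * α)
      rw [pow_succ]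
      linarith
  have hlim : Tendsto (fun n : ℕ => (2 * α) ^ n * gD G x (T x)) atTop (nhds 0) := by
    simpa using (tendsto_pow_atTop_nhds_zero_of_lt_one (by linarith : (0 : ℝ) ≤ 2 * α)
      (by linarith)).mul_const (gD G x (T x))
  obtain ⟨n, hn⟩ := (hlim.eventually (gt_mem_nhds hε)).exists
  obtain ⟨i, z, hz, h⟩ := key n
  exact ⟨z, Set.mem_iUnion.2 ⟨i, hz⟩, lt_of_le_of_lt h hn⟩
end

section
/- Let G be a G-metric on a nonempty set X, let X_1,…,X_m be nonempty subsets of X, and let T : ∪_{i=1}^m X_i → ∪_{i=1}^m X_i be a cyclical operator. Write D(x,y) = G(x,y,y) + G(y,x,x). Suppose T is a G-Mohseni cyclical operator, i.e. there exists α ∈ (0,1/2) such that D(Tx,Ty) ≤ α·(D(x,y) + D(Tx,Ty)) for all x ∈ X_i and y ∈ X_{i+1} (indices mod m). Then for every ε > 0 and all x, y ∈ F_ε^G(T), one has D(x,y) ≤ 2ε(1+α)/(1−2α). -/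
open Filter Set

/-- For a G-Mohseni cyclical operator, any two `ε`-fixed points `x, y` satisfy
`D(x,y) ≤ 2ε(1+α)/(1−2α)`. -/
theorem stmt_9 {X : Type*} [Nonempty X] {m : ℕ} [NeZero m]
    (G : X → X → X → ℝ) (hG : IsGMetric G)
    (A : Fin m → Set X) (hA : ∀ i, (A i).Nonempty)
    (T : X → X) (hT : IsCyclical A T)
    (α : ℝ) (hα : α ∈ Set.Ioo (0 : ℝ) (1/2))
    (hcontr : ∀ i : Fin m, ∀ x ∈ A i, ∀ y ∈ A (i + 1),
      gD G (T x) (T y) ≤ α * (gD G x y + gD G (T x) (T y))) :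
    ∀ ε > 0, ∀ x ∈ {x ∈ ⋃ i, A i | gD G x (T x) < ε},
      ∀ y ∈ {x ∈ ⋃ i, A i | gD G x (T x) < ε},
      gD G x y ≤ 2 * ε * (1 + α) / (1 - 2 * α) := by
  obtain ⟨h0, h1⟩ := hα
  have tri : ∀ a b c, gD G a c ≤ gD G a b + gD G b c := by
    intro a b c
    have e1 := hG.rect a c c b
    have e2 := hG.rect c a a b
    unfold gD
    linarith
  have sym : ∀ a b, gD G a b = gD G b a := fun a b => by unfold gD; ring
  have self0 : ∀ a, gD G a a = 0 := fun a => by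
    have := (hG.eq_iff a a a).2 ⟨rfl, rfl⟩
    unfold gD
    linarith
  obtain ⟨k, hk⟩ : ∃ k, k = α / (1 - α) := ⟨_, rfl⟩
  have hα1 : 0 < 1 - α := by linarith
  have hk0 : 0 < k := by rw [hk]; positivity
  have hk1 : k < 1 := by rw [hk, div_lt_one hα1]; linarith
  have hkα : k * (1 - α) = α := by rw [hk]; field_simp
  have con : ∀ i : Fin m, ∀ x ∈ A i, ∀ y ∈ A (i + 1), gD G (T x) (T y) ≤ k * gD G x y := by
    intro i x hx y hy
    have h := hcontr i x hx y hy
    have h2 : (1 - α) * gD G (T x) (T y) ≤ (1 - α) * (k * gD G x y) := by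
      have : (1 - α) * (k * gD G x y) = α * gD G x y := by rw [← mul_assoc, mul_comm (1 - α), hkα]
      rw [this]; linarith
    exact le_of_mul_le_mul_left h2 hα1
  rintro ε hε x ⟨hx, hxε⟩ y ⟨hy, hyε⟩
  obtain ⟨i, hi⟩ := Set.mem_iUnion.1 hx
  obtain ⟨j, hj⟩ := Set.mem_iUnion.1 hy
  have orb : ∀ n : ℕ, T^[n] x ∈ A (i + Fin.ofNat m n) := by
    intro n
    induction n with
    | zero => simpa using hi
    | succ n ih =>
      rw [Function.iterate_succ_apply']
      have := hT _ ih
      have e : i + Fin.ofNat m (n + 1) = i + Fin.ofNat m n + 1 := by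
        apply Fin.ext
        simp [Fin.val_add, Fin.ofNat, add_assoc]
      rw [e]; exact this
  have step : ∀ n : ℕ, gD G (T^[n] x) (T (T^[n] x)) ≤ k ^ n * ε := by
    intro n
    induction n with
    | zero => simpa using hxε.le
    | succ n ih =>
      rw [Function.iterate_succ_apply']
      have := con _ _ (orb n) _ (hT _ (orb n))
      have h3 := mul_le_mul_of_nonneg_left ih hk0.le
      rw [pow_succ]; linarith
  have far : ∀ n : ℕ, (1 - k) * gD G x (T^[n] x) ≤ ε * (1 - k ^ n) := by
    intro n
    induction n with
    | zero => simp [self0]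
    | succ n ih =>
      rw [Function.iterate_succ_apply']
      have a := (tri x (T^[n] x) (T (T^[n] x))).trans (add_le_add_right (step n) _)
      have := mul_le_mul_of_nonneg_left a (sub_nonneg.2 hk1.le)
      rw [pow_succ]; linarith
  obtain ⟨n, hn⟩ : ∃ n : ℕ, i + Fin.ofNat m n + 1 = j := by
    refine ⟨(j - 1 - i).val, ?_⟩
    rw [Fin.ofNat_val_eq_self]
    open Fin.CommRing in ring
  have c := con _ _ (orb n) y (by rw [hn]; exact hj)
  have t1 := tri (T^[n] x) (T (T^[n] x)) y
  have t2 := tri (T (T^[n] x)) (T y) y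
  have t3 := tri x (T^[n] x) y
  have s := step n
  have f := far n
  rw [sym (T y) y] at t2
  have near : (1 - k) * gD G (T^[n] x) y ≤ k ^ n * ε + ε := by linarith
  have tot : (1 - k) * gD G x y ≤ 2 * ε := by
    have := mul_le_mul_of_nonneg_left t3 (sub_nonneg.2 hk1.le)
    linarith
  rw [le_div_iff₀ (by linarith)]
  have h4 := mul_le_mul_of_nonneg_left tot hα1.le
  have e4 : (1 - α) * ((1 - k) * gD G x y) = gD G x y * (1 - 2 * α) := by
    linear_combination (-gD G x y) * hkα
  rw [e4] at h4
  have : 0 < ε * α := mul_pos hε h0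
  linarith
end

section
/- Let G be a G-metric on a nonempty set X, let X_1,…,X_m be nonempty subsets of X, and let T : ∪_{i=1}^m X_i → ∪_{i=1}^m X_i be a cyclical operator. Write D(x,y) = G(x,y,y) + G(y,x,x). Suppose T is a G-Mohsenialhosseini cyclical operator: there exist α, β, γ ∈ [0,1/2) such that for all x ∈ X_i and y ∈ X_{i+1} (indices mod m) at least one of the following holds: (i) D(Tx,Ty) ≤ α·(D(x,y) + D(Tx,Ty)); (ii) D(Tx,Ty) ≤ β·(D(x,Tx) + D(y,Ty)); (iii) D(Tx,Ty) ≤ γ·(D(x,Ty) + D(y,Tx)). Set η = max{α/(1−α), β/(1−β), γ/(1−γ)}. Then for every ε > 0 and all x, y ∈ F_ε^G(T), one has D(x,y) ≤ 2ε(1+η)/(1−η). -/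
open Filter Set

theorem gD_nonneg' {X : Type*} {G : X → X → X → ℝ} (hG : IsGMetric G) (x y : X) :
    0 ≤ gD G x y := by
  unfold gD
  have key : ∀ a b, 0 ≤ G a b b := by
    intro a b
    by_cases h : b = a
    · exact ((hG.eq_iff a b b).2 ⟨h.symm, rfl⟩).ge
    · rw [hG.symm_cycle a b b]; exact (hG.pos b a h).le
  exact add_nonneg (key x y) (key y x)

theorem gD_self' {X : Type*} {G : X → X → X → ℝ} (hG : IsGMetric G) (x : X) :
    gD G x x = 0 := by
  unfold gD
  rw [(hG.eq_iff x x x).2 ⟨rfl, rfl⟩]; simp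

theorem gD_comm' {X : Type*} (G : X → X → X → ℝ) (x y : X) : gD G x y = gD G y x := by
  unfold gD; ring

theorem gD_tri' {X : Type*} {G : X → X → X → ℝ} (hG : IsGMetric G) (x y z : X) :
    gD G x z ≤ gD G x y + gD G y z := by
  unfold gD
  linarith [hG.rect x z z y, hG.rect z x x y]

theorem fr_aux {a k d t : ℝ} (ha : a < 1/2) (hk : a / (1 - a) ≤ k) (hd : 0 ≤ d)
    (h : t ≤ a * (d + t)) : t ≤ k * d := by
  have h1 : 0 < 1 - a := by linarith
  rw [div_le_iff₀ h1] at hk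
  have h2 : a * d ≤ k * (1 - a) * d := mul_le_mul_of_nonneg_right hk hd
  have h3 : (1 - a) * t ≤ (1 - a) * (k * d) := by nlinarith
  exact le_of_mul_le_mul_left h3 h1

theorem orbit_mem {X : Type*} {m : ℕ} [NeZero m] (A : Fin m → Set X)
    (T : X → X) (hT : IsCyclical A T) (j : Fin m) (y : X) (hy : y ∈ A j) :
    ∀ n : ℕ, ∀ k : Fin m, k.val = (j.val + n) % m → T^[n] y ∈ A k := by
  intro n
  induction n with
  | zero =>
    intro k hk
    have : k = j := Fin.ext (by rw [hk, Nat.add_zero, Nat.mod_eq_of_lt j.isLt])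
    simpa [this] using hy
  | succ n ih =>
    intro k hk
    have hm : 0 < m := Nat.pos_of_ne_zero (NeZero.ne m)
    have h1 := hT _ (ih ⟨(j.val + n) % m, Nat.mod_lt _ hm⟩ rfl)
    rw [Function.iterate_succ_apply']
    convert h1 using 2
    apply Fin.ext
    rw [hk, Fin.val_add, Fin.val_one', ← Nat.add_mod, Nat.add_assoc]

/-- For a G-Mohsenialhosseini cyclical operator with
`η = max{α/(1−α), β/(1−β), γ/(1−γ)}`, any two `ε`-fixed points `x, y` satisfy
`D(x,y) ≤ 2ε(1+η)/(1−η)`. -/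
theorem stmt_10 {X : Type*} [Nonempty X] {m : ℕ} [NeZero m]
    (G : X → X → X → ℝ) (hG : IsGMetric G)
    (A : Fin m → Set X) (hA : ∀ i, (A i).Nonempty)
    (T : X → X) (hT : IsCyclical A T)
    (α β γ : ℝ)
    (hα : α ∈ Set.Ico (0 : ℝ) (1/2)) (hβ : β ∈ Set.Ico (0 : ℝ) (1/2))
    (hγ : γ ∈ Set.Ico (0 : ℝ) (1/2))
    (hcontr : ∀ i : Fin m, ∀ x ∈ A i, ∀ y ∈ A (i + 1),
      gD G (T x) (T y) ≤ α * (gD G x y + gD G (T x) (T y)) ∨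
      gD G (T x) (T y) ≤ β * (gD G x (T x) + gD G y (T y)) ∨
      gD G (T x) (T y) ≤ γ * (gD G x (T y) + gD G y (T x))) :
    ∀ ε > 0, ∀ x ∈ {x ∈ ⋃ i, A i | gD G x (T x) < ε},
      ∀ y ∈ {x ∈ ⋃ i, A i | gD G x (T x) < ε},
      gD G x y ≤ 2 * ε * (1 + max (α / (1 - α)) (max (β / (1 - β)) (γ / (1 - γ)))) /
        (1 - max (α / (1 - α)) (max (β / (1 - β)) (γ / (1 - γ)))) := by
  have nn := gD_nonneg' hG
  have tri := gD_tri' hG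
  intro ε hε x hx y hy
  generalize hk : max (α / (1 - α)) (max (β / (1 - β)) (γ / (1 - γ))) = k
  have ka : α / (1 - α) ≤ k := hk ▸ le_max_left _ _
  have kb : β / (1 - β) ≤ k := hk ▸ (le_max_left _ _).trans (le_max_right _ _)
  have kc : γ / (1 - γ) ≤ k := hk ▸ (le_max_right _ _).trans (le_max_right _ _)
  have fr1 : ∀ a : ℝ, a < 1/2 → a / (1 - a) < 1 := by
    intro a ha
    rw [div_lt_one (by linarith)]; linarith
  have k1 : k < 1 := by
    rw [← hk]
    exact max_lt (fr1 _ hα.2) (max_lt (fr1 _ hβ.2) (fr1 _ hγ.2))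
  have k0 : 0 ≤ k := le_trans (div_nonneg hα.1 (by linarith [hα.2])) ka
  obtain ⟨hx, hxe⟩ := hx
  obtain ⟨hy, hye⟩ := hy
  obtain ⟨i, hxi⟩ := Set.mem_iUnion.1 hx
  obtain ⟨j, hyj⟩ := Set.mem_iUnion.1 hy
  have step : ∀ l, ∀ z ∈ A l, gD G (T z) (T (T z)) ≤ k * gD G z (T z) := by
    intro l z hz
    rcases hcontr l z hz (T z) (hT l hz) with h | h | h
    · exact fr_aux hα.2 ka (nn _ _) h
    · exact fr_aux hβ.2 kb (nn _ _) h
    · refine fr_aux hγ.2 kc (nn _ _) (h.trans ?_)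
      rw [gD_self' hG, add_zero]
      exact mul_le_mul_of_nonneg_left (tri _ _ _) hγ.1
  have adj : ∀ l, ∀ u ∈ A l, ∀ z ∈ A (l + 1),
      (1 - k) * gD G u z ≤ gD G u (T u) + gD G z (T z) := by
    intro l u hu z hz
    have hd : gD G u z ≤ gD G u (T u) + gD G z (T z) + gD G (T u) (T z) := by
      linarith [tri u (T u) z, tri (T u) (T z) z, gD_comm' G z (T z)]
    have hp : 0 ≤ gD G u (T u) + gD G z (T z) := add_nonneg (nn _ _) (nn _ _)
    rcases hcontr l u hu z hz with h | h | h
    · have := fr_aux hα.2 ka (nn _ _) h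
      linarith
    · have hb : β ≤ k := by
        rw [div_le_iff₀ (by linarith [hβ.2])] at kb
        nlinarith [mul_nonneg k0 hβ.1]
      have h2 := mul_le_mul_of_nonneg_right hb hp
      have h3 : gD G u z ≤ (1 + k) * (gD G u (T u) + gD G z (T z)) := by linarith
      have h4 := mul_le_mul_of_nonneg_left h3 (by linarith : 0 ≤ 1 - k)
      nlinarith [mul_nonneg (mul_nonneg k0 k0) hp]
    · have h1 : gD G u (T z) ≤ gD G u (T u) + gD G (T u) (T z) := tri _ _ _
      have h2 : gD G z (T u) ≤ gD G z (T z) + gD G (T u) (T z) := by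
        rw [gD_comm' G (T u)]; exact tri _ _ _
      have hg := hγ.2
      generalize hpe : gD G u (T u) + gD G z (T z) = p at *
      have h3 : gD G (T u) (T z) ≤ γ * (p + 2 * gD G (T u) (T z)) :=
        h.trans (mul_le_mul_of_nonneg_left (by linarith) hγ.1)
      have h5 : (1 - 2 * γ) * gD G u z ≤ (1 - γ) * p := by
        have := mul_le_mul_of_nonneg_left hd (by linarith : 0 ≤ 1 - 2 * γ)
        linarith
      rw [div_le_iff₀ (by linarith)] at kc
      have h6 := mul_le_mul_of_nonneg_left h5 (by linarith : 0 ≤ 1 - k)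
      have h7 : (1 - k) * (1 - γ) * p ≤ (1 - 2 * γ) * p :=
        mul_le_mul_of_nonneg_right (by linarith) hp
      refine le_of_mul_le_mul_left (a := 1 - 2 * γ) ?_ (by linarith)
      linarith
  have hm : 0 < m := Nat.pos_of_ne_zero (NeZero.ne m)
  have orb := orbit_mem A T hT j y hyj
  have orb' : ∀ n : ℕ, gD G (T^[n] y) (T (T^[n] y)) ≤ k ^ n * ε ∧
      (1 - k) * gD G y (T^[n] y) ≤ (1 - k ^ n) * ε := by
    intro n
    induction n with
    | zero => simp [gD_self' hG, hye.le]
    | succ n ih =>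
      rw [Function.iterate_succ_apply']
      constructor
      · have h1 := step _ _ (orb n ⟨(j.val + n) % m, Nat.mod_lt _ hm⟩ rfl)
        have h2 := mul_le_mul_of_nonneg_left ih.1 k0
        rw [pow_succ]; linarith
      · have h1 := mul_le_mul_of_nonneg_left (tri y (T^[n] y) (T (T^[n] y)))
          (by linarith : 0 ≤ 1 - k)
        have h2 := mul_le_mul_of_nonneg_left ih.1 (by linarith : 0 ≤ 1 - k)
        rw [pow_succ]; linarith [ih.2]
  obtain ⟨n, hn⟩ : ∃ n : ℕ, (i + 1 : Fin m).val = (j.val + n) % m := by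
    refine ⟨(i + 1 : Fin m).val + m - j.val, ?_⟩
    have e : j.val + ((i + 1 : Fin m).val + m - j.val) = (i + 1 : Fin m).val + m := by
      generalize (i + 1 : Fin m).val = c
      have := j.isLt
      omega
    rw [e, Nat.add_mod_right, Nat.mod_eq_of_lt (i + 1 : Fin m).isLt]
  have h1 := adj i x hxi _ (orb n _ hn)
  have h2 := orb' n
  have h3 := mul_le_mul_of_nonneg_left (tri x (T^[n] y) y) (by linarith : 0 ≤ 1 - k)
  rw [gD_comm' G (T^[n] y) y] at h3
  rw [le_div_iff₀ (by linarith)]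
  nlinarith [mul_nonneg hε.le k0, h2.1, h2.2]
end

section
/- Let X be a metric space with metric d, let X_1,…,X_m be nonempty subsets of X, let T : ∪_{i=1}^m X_i → ∪_{i=1}^m X_i be a cyclical operator, and let ε > 0. Assume: (i) F_ε(T) ≠ ∅; (ii) there is a function φ : (0,∞) → (0,∞) such that for every θ > 0 and all x, y ∈ F_ε(T), d(x,y) − d(Tx,Ty) ≤ θ implies d(x,y) ≤ φ(θ). Then the diameter of F_ε(T) satisfies δ(F_ε(T)) = sup{d(x,y) : x, y ∈ F_ε(T)} ≤ φ(2ε). -/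
open Filter Set

/-- Quantitative lemma: if the set `F_ε(T)` of `ε`-fixed points of a cyclical
operator `T` is nonempty and satisfies the `φ`-condition, then its diameter is at
most `φ(2ε)`. -/
theorem stmt_16 {X : Type*} [MetricSpace X] {m : ℕ} [NeZero m]
    (A : Fin m → Set X) (hA : ∀ i, (A i).Nonempty)
    (T : X → X) (hT : IsCyclical A T)
    (ε : ℝ) (hε : 0 < ε)
    (hne : {x ∈ ⋃ i, A i | dist (T x) x < ε}.Nonempty)
    (φ : ℝ → ℝ) (hφpos : ∀ θ > 0, 0 < φ θ)
    (hφ : ∀ θ > 0, ∀ x ∈ {x ∈ ⋃ i, A i | dist (T x) x < ε},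
      ∀ y ∈ {x ∈ ⋃ i, A i | dist (T x) x < ε},
      dist x y - dist (T x) (T y) ≤ θ → dist x y ≤ φ θ) :
    sSup {d : ℝ | ∃ x ∈ {x ∈ ⋃ i, A i | dist (T x) x < ε},
      ∃ y ∈ {x ∈ ⋃ i, A i | dist (T x) x < ε}, d = dist x y} ≤ φ (2 * ε) := by
  apply Real.sSup_le
  · rintro d ⟨x, hx, y, hy, rfl⟩
    refine hφ (2 * ε) (by linarith) x hx y hy ?_
    have h1 := dist_triangle4 x (T x) (T y) y
    have h2 : dist (T x) x < ε := hx.2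
    have h3 : dist (T y) y < ε := hy.2
    rw [dist_comm x (T x)] at h1
    linarith
  · exact (hφpos (2 * ε) (by linarith)).le
end

section
/- Let G be a G-metric on a nonempty set X and write D(x,y) = G(x,y,y) + G(y,x,x). Let T : X → X and suppose there exist α, β, γ ∈ [0,1/2) such that for all x, y ∈ X at least one of the following holds: (i) D(Tx,Ty) ≤ α·(D(x,y) + D(Tx,Ty)); (ii) D(Tx,Ty) ≤ β·(D(x,Tx) + D(y,Ty)); (iii) D(Tx,Ty) ≤ γ·(D(x,Ty) + D(y,Tx)). Set η = max{α/(1−α), β/(1−β), γ/(1−γ)}. Then for all x, y ∈ X both D(Tx,Ty) ≤ 2η·D(x,Tx) + η·D(x,y) and D(Tx,Ty) ≤ 2η·D(y,Ty) + η·D(x,y) hold. -/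
open Filter Set

/-- For a Mohsenialhosseini-type operator on a G-metric space, with
`η = max{α/(1−α), β/(1−β), γ/(1−γ)}`, both
`D(Tx,Ty) ≤ 2η·D(x,Tx) + η·D(x,y)` and `D(Tx,Ty) ≤ 2η·D(y,Ty) + η·D(x,y)` hold. -/
theorem stmt_18 {X : Type*} [Nonempty X]
    (G : X → X → X → ℝ) (hG : IsGMetric G)
    (T : X → X) (α β γ : ℝ)
    (hα : α ∈ Set.Ico (0 : ℝ) (1/2)) (hβ : β ∈ Set.Ico (0 : ℝ) (1/2))
    (hγ : γ ∈ Set.Ico (0 : ℝ) (1/2))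
    (hcontr : ∀ x y : X,
      gD G (T x) (T y) ≤ α * (gD G x y + gD G (T x) (T y)) ∨
      gD G (T x) (T y) ≤ β * (gD G x (T x) + gD G y (T y)) ∨
      gD G (T x) (T y) ≤ γ * (gD G x (T y) + gD G y (T x))) :
    ∀ x y : X,
      gD G (T x) (T y) ≤
        2 * max (α / (1 - α)) (max (β / (1 - β)) (γ / (1 - γ))) * gD G x (T x) +
          max (α / (1 - α)) (max (β / (1 - β)) (γ / (1 - γ))) * gD G x y ∧
      gD G (T x) (T y) ≤
        2 * max (α / (1 - α)) (max (β / (1 - β)) (γ / (1 - γ))) * gD G y (T y) +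
          max (α / (1 - α)) (max (β / (1 - β)) (γ / (1 - γ))) * gD G x y := by
  have symm : ∀ x y, gD G x y = gD G y x := fun x y => by unfold gD; ring
  have tri : ∀ x y a, gD G x y ≤ gD G x a + gD G a y := fun x y a => by
    have h1 := hG.rect x y y a
    have h2 := hG.rect y x x a
    unfold gD; linarith
  have nonneg : ∀ x y, 0 ≤ gD G x y := fun x y => by
    have h1 := tri x x y
    have h2 : gD G x x = 0 := by
      unfold gD
      rw [(hG.eq_iff x x x).2 ⟨rfl, rfl⟩]; ring
    have h3 := symm x y
    linarith
  generalize hη : max (α / (1 - α)) (max (β / (1 - β)) (γ / (1 - γ))) = η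
  have ha : α / (1 - α) ≤ η := hη ▸ le_max_left _ _
  have hb : β / (1 - β) ≤ η := hη ▸ (le_max_left _ _).trans (le_max_right _ _)
  have hc : γ / (1 - γ) ≤ η := hη ▸ (le_max_right _ _).trans (le_max_right _ _)
  have key : ∀ t d S : ℝ, t ∈ Set.Ico (0 : ℝ) (1/2) → t / (1 - t) ≤ η → 0 ≤ S →
      (1 - t) * d ≤ t * S → d ≤ η * S := fun t d S ht hle hS h => by
    have h1 : 0 < 1 - t := by linarith [ht.2]
    have h2 : d ≤ t / (1 - t) * S := by
      rw [div_mul_eq_mul_div, le_div_iff₀ h1]; linarith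
    exact h2.trans (mul_le_mul_of_nonneg_right hle hS)
  have main : ∀ x y, gD G (T x) (T y) ≤ η * (2 * gD G x (T x) + gD G x y) := fun x y => by
    have n1 := nonneg x (T x)
    have n2 := nonneg x y
    have hS : 0 ≤ 2 * gD G x (T x) + gD G x y := by linarith
    rcases hcontr x y with h | h | h
    · have := mul_nonneg hα.1 n1
      exact key α _ _ hα ha hS (by linarith)
    · have t1 := tri y (T y) x
      have t2 := tri x (T y) (T x)
      rw [symm y x] at t1
      have := mul_le_mul_of_nonneg_left (t1.trans (add_le_add_right t2 _)) hβ.1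
      exact key β _ _ hβ hb hS (by linarith)
    · have t1 := tri y (T x) x
      have t2 := tri x (T y) (T x)
      rw [symm y x] at t1
      have := mul_le_mul_of_nonneg_left (add_le_add t2 t1) hγ.1
      exact key γ _ _ hγ hc hS (by linarith)
  intro x y
  have m1 := main x y
  have m2 := main y x
  rw [symm (T y) (T x), symm y x] at m2
  constructor <;> linarith
end
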